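/- arXiv:math/0301175 — 2 statements merged into one kernel-verified Lean document; each statement's English description precedes it below -/
import Mathlib

section
/- Second cone identity for the streaming operator: let v ∈ ℝ³ with |v| < 1 and i ∈ {1,2,3}. Then for every φ ∈ C_c^∞(ℝ⁴), ⟨Y, t (x·v − t) ∂_{x_i} φ⟩ = ⟨Y, x_i φ + t x_i (∂_t + v·∇_x) φ⟩; that is, t (x·v − t) ∂_{x_i} Y = t x_i T Y in the sense of distributions on ℝ⁴, where T = ∂_t + v·∇_x. -/
open MeasureTheory Real Set Filter Metric RealInnerProductSpace
open scoped ENNReal NNReal Topology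

noncomputable section

/-- Physical space `ℝ³` with its Euclidean structure. -/
abbrev E3 : Type := EuclideanSpace ℝ (Fin 3)

/-- The `i`-th standard basis vector of `ℝ³`. -/
def e3 (i : Fin 3) : E3 := EuclideanSpace.single i 1

/-- The rotation invariant surface measure on the unit sphere `S² ⊂ ℝ³`
(with total mass `4π`). -/
def sphMeasure : Measure (Metric.sphere (0 : E3) 1) := (volume : Measure E3).toSphere

/-- The forward fundamental solution `Y` of the d'Alembertian in `1+3` dimensions, as a
measure on `ℝ⁴ = ℝₜ × ℝ³ₓ`: it acts on a function `φ` by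
`⟨Y,φ⟩ = ∫₀^∞ (1/(4πt)) ∫_{|x|=t} φ(t,x) dσ_t(x) dt
       = ∫₀^∞ (t/(4π)) ∫_{S²} φ(t,tω) dσ(ω) dt`. -/
def Ymeas : Measure (ℝ × E3) :=
  Measure.map (fun q : ℝ × Metric.sphere (0 : E3) 1 => (q.1, q.1 • (q.2 : E3)))
    ((((volume : Measure ℝ).restrict (Set.Ioi 0)).withDensity
        fun t => ENNReal.ofReal (t / (4 * Real.pi))).prod sphMeasure)

/-- Time derivative `∂ₜ` of a function on `ℝ⁴ = ℝₜ × ℝ³ₓ`. -/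
def dt4 (g : ℝ × E3 → ℝ) (p : ℝ × E3) : ℝ := fderiv ℝ g p ((1 : ℝ), (0 : E3))

/-- Spatial partial derivative `∂_{x_i}` of a function on `ℝ⁴ = ℝₜ × ℝ³ₓ`. -/
def dx4 (i : Fin 3) (g : ℝ × E3 → ℝ) (p : ℝ × E3) : ℝ := fderiv ℝ g p ((0 : ℝ), e3 i)

/-- The streaming operator `T = ∂ₜ + v·∇ₓ`, i.e. the directional derivative
along `(1,v)`. -/
def Tstr (v : E3) (g : ℝ × E3 → ℝ) (p : ℝ × E3) : ℝ := fderiv ℝ g p ((1 : ℝ), v)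

/-!
Write `Λ x = (‖x‖, x)` for the parametrization of the forward cone by space. Up to the factor
`(4π)⁻¹`, polar coordinates identify `Y` with the image under `Λ` of `dx / ‖x‖`. For a test function
`h`, the function `h ∘ Λ` is Lipschitz with compact support, hence `∫ ∂_w (h ∘ Λ) dx = 0` for
every direction `w`. With `e` the `i`-th basis vector, apply this to `h = (x·v - t) φ` with `w = e`,
to `h = (x·e) φ` with `w = v`, and subtract: the terms `(e·v) φ` cancel, the products
`(x·v) (x·e) / ‖x‖ ∂_t φ` cancel, and what is left is the difference of the two integrands.
-/

section LineDeriv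

lemma hasCompactSupport_lineDeriv {𝕜 E F : Type*} [NontriviallyNormedField 𝕜]
    [NormedAddCommGroup E] [NormedSpace 𝕜 E] [NormedAddCommGroup F] [NormedSpace 𝕜 F]
    {f : E → F} (hf : HasCompactSupport f) (w : E) :
    HasCompactSupport fun x => lineDeriv 𝕜 f x w := by
  refine hf.mono' fun x hx => ?_
  contrapose! hx
  have hf0 : f =ᶠ[𝓝 x] 0 := notMem_tsupport_iff_eventuallyEq.mp hx
  rw [Function.notMem_support, hf0.lineDeriv_eq]
  simp [lineDeriv]

variable {E : Type*} [NormedAddCommGroup E] [NormedSpace ℝ E] [MeasurableSpace E] [BorelSpace E]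
  {C : ℝ≥0} {f : E → ℝ}

lemma integrable_lineDeriv (μ : Measure E) [IsFiniteMeasureOnCompacts μ]
    (hf : LipschitzWith C f) (hfc : HasCompactSupport f) (w : E) :
    Integrable (fun x => lineDeriv ℝ f x w) μ := by
  have hw : HasCompactSupport fun x => lineDeriv ℝ f x w := hasCompactSupport_lineDeriv hfc w
  rw [← integrableOn_iff_integrable_of_support_subset (subset_tsupport _)]
  have : IsFiniteMeasure (μ.restrict (tsupport fun x => lineDeriv ℝ f x w)) :=
    isFiniteMeasure_restrict.mpr hw.measure_lt_top.ne
  exact ((hf.memLp_lineDeriv w).restrict _).integrable le_top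

lemma integral_lineDeriv_eq_zero [FiniteDimensional ℝ E] (μ : Measure E) [μ.IsAddHaarMeasure]
    (hf : LipschitzWith C f) (hfc : HasCompactSupport f) (w : E) :
    ∫ x, lineDeriv ℝ f x w ∂μ = 0 := by
  have hparts := (LipschitzWith.const (1 : ℝ)).integral_lineDeriv_mul_eq (μ := μ) hf hfc (-w)
  simpa [lineDeriv] using hparts.symm

end LineDeriv

section ForwardCone

lemma isClosedEmbedding_norm_prod {E : Type*} [NormedAddCommGroup E] :
    Topology.IsClosedEmbedding fun x : E => (‖x‖, x) :=
  Function.LeftInverse.isClosedEmbedding (f := Prod.snd) (fun _ => rfl) continuous_snd (by fun_prop)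

lemma integrable_comp_norm_prod {E F : Type*} [NormedAddCommGroup E] [MeasurableSpace E]
    [BorelSpace E] [NormedAddCommGroup F] (μ : Measure E) [IsFiniteMeasureOnCompacts μ]
    {f : ℝ × E → F} (hf : Continuous f) (hfc : HasCompactSupport f) :
    Integrable (fun x => f (‖x‖, x)) μ :=
  (hf.comp isClosedEmbedding_norm_prod.continuous).integrable_of_hasCompactSupport
    (hfc.comp_isClosedEmbedding isClosedEmbedding_norm_prod)

lemma exists_lipschitzWith_comp_norm_prod {E : Type*} [NormedAddCommGroup E] [NormedSpace ℝ E]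
    {h : ℝ × E → ℝ} (hh : ContDiff ℝ 1 h) (hhc : HasCompactSupport h) :
    ∃ C, LipschitzWith C fun x => h (‖x‖, x) := by
  obtain ⟨C, hC⟩ := hh.lipschitzWith_of_hasCompactSupport hhc one_ne_zero
  exact ⟨_, hC.comp (lipschitzWith_one_norm.prodMk LipschitzWith.id)⟩

variable {E : Type*} [NormedAddCommGroup E] [InnerProductSpace ℝ E]

/-- The derivative of `h` at the point `(‖x‖, x)` of the forward cone along the tangent vector
`(x·w / ‖x‖, w)` of the cone, the lift of the direction `w`. The cone has no tangent
space at its apex, where this is the derivative along `(0, w)`. -/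
def coneDeriv (w : E) (h : ℝ × E → ℝ) (x : E) : ℝ := fderiv ℝ h (‖x‖, x) (⟪x, w⟫ / ‖x‖, w)

lemma hasFDerivAt_norm_of_ne_zero {x : E} (hx : x ≠ 0) :
    HasFDerivAt (fun y : E => ‖y‖) (‖x‖⁻¹ • innerSL ℝ x) x := by
  have hsq := (hasStrictFDerivAt_norm_sq x).hasFDerivAt.sqrt (by simpa using hx)
  simp only [Real.sqrt_sq (norm_nonneg _)] at hsq
  refine hsq.congr_fderiv ?_
  ext w
  simp only [one_div, mul_inv_rev, smul_apply, coe_innerSL_apply,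
    nsmul_eq_mul, Nat.cast_ofNat, smul_eq_mul]
  field_simp

lemma lineDeriv_comp_norm_prod {h : ℝ × E → ℝ} {x : E} (hx : x ≠ 0)
    (hh : DifferentiableAt ℝ h (‖x‖, x)) (w : E) :
    lineDeriv ℝ (fun y => h (‖y‖, y)) x w = coneDeriv w h x := by
  have hlift := (hasFDerivAt_norm_of_ne_zero hx).prodMk (hasFDerivAt_id x)
  have hcomp := HasFDerivAt.comp (f := fun y : E => (‖y‖, y)) x hh.hasFDerivAt hlift
  refine (hcomp.hasLineDerivAt w).lineDeriv.trans ?_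
  simp [coneDeriv, div_eq_inv_mul]

lemma coneDeriv_clm_mul (ℓ : ℝ × E →L[ℝ] ℝ) {φ : ℝ × E → ℝ} {x : E}
    (hφ : DifferentiableAt ℝ φ (‖x‖, x)) (w : E) :
    coneDeriv w (fun p => ℓ p * φ p) x
      = ℓ (‖x‖, x) * coneDeriv w φ x + φ (‖x‖, x) * ℓ (⟪x, w⟫ / ‖x‖, w) := by
  simp [coneDeriv, fderiv_fun_mul ℓ.differentiableAt hφ]

lemma coneDeriv_sub_coneDeriv_eq (v e : E) {φ : ℝ × E → ℝ} {x : E} (hx : x ≠ 0)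
    (hφ : DifferentiableAt ℝ φ (‖x‖, x)) :
    coneDeriv e (fun p => (⟪p.2, v⟫ - p.1) * φ p) x - coneDeriv v (fun p => ⟪p.2, e⟫ * φ p) x
      = ‖x‖⁻¹ * (‖x‖ * (⟪x, v⟫ - ‖x‖) * fderiv ℝ φ (‖x‖, x) (0, e))
        - ‖x‖⁻¹ * (⟪x, e⟫ * φ (‖x‖, x) + ‖x‖ * ⟪x, e⟫ * fderiv ℝ φ (‖x‖, x) (1, v)) := by
  have hleft : coneDeriv e (fun p => (⟪p.2, v⟫ - p.1) * φ p) x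
      = (⟪x, v⟫ - ‖x‖) * coneDeriv e φ x + φ (‖x‖, x) * (⟪e, v⟫ - ⟪x, e⟫ / ‖x‖) := by
    have hprod := coneDeriv_clm_mul ((innerSL ℝ v).comp (.snd ℝ ℝ E) - .fst ℝ ℝ E) hφ e
    simpa [real_inner_comm] using hprod
  have hright : coneDeriv v (fun p => ⟪p.2, e⟫ * φ p) x
      = ⟪x, e⟫ * coneDeriv v φ x + φ (‖x‖, x) * ⟪e, v⟫ := by
    simpa [real_inner_comm] using coneDeriv_clm_mul ((innerSL ℝ e).comp (.snd ℝ ℝ E)) hφ v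
  have hsplit (s : ℝ) (w : E) : fderiv ℝ φ (‖x‖, x) (s, w)
      = s * fderiv ℝ φ (‖x‖, x) (1, 0) + fderiv ℝ φ (‖x‖, x) (0, w) := by
    rw [← smul_eq_mul, ← map_smul, ← map_add]
    simp
  have hx' : ‖x‖ ≠ 0 := norm_ne_zero_iff.mpr hx
  rw [hleft, hright, coneDeriv, coneDeriv, hsplit (⟪x, e⟫ / ‖x‖), hsplit (⟪x, v⟫ / ‖x‖), hsplit 1 v]
  field_simp
  ring

variable [FiniteDimensional ℝ E] [Nontrivial E] [MeasurableSpace E] [BorelSpace E]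
  (μ : Measure E) [μ.IsAddHaarMeasure]

lemma coneDeriv_ae_eq_lineDeriv {h : ℝ × E → ℝ} (hh : Differentiable ℝ h) (w : E) :
    coneDeriv w h =ᵐ[μ] fun x => lineDeriv ℝ (fun y => h (‖y‖, y)) x w := by
  filter_upwards [Measure.ae_ne μ 0] with x hx
  exact (lineDeriv_comp_norm_prod hx (hh _) w).symm

lemma integrable_coneDeriv {h : ℝ × E → ℝ} (hh : ContDiff ℝ 1 h) (hhc : HasCompactSupport h)
    (w : E) : Integrable (coneDeriv w h) μ := by
  obtain ⟨C, hC⟩ := exists_lipschitzWith_comp_norm_prod hh hhc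
  exact (integrable_lineDeriv μ hC (hhc.comp_isClosedEmbedding isClosedEmbedding_norm_prod) w).congr
    (coneDeriv_ae_eq_lineDeriv μ (hh.differentiable one_ne_zero) w).symm

lemma integral_coneDeriv_eq_zero {h : ℝ × E → ℝ} (hh : ContDiff ℝ 1 h)
    (hhc : HasCompactSupport h) (w : E) : ∫ x, coneDeriv w h x ∂μ = 0 := by
  obtain ⟨C, hC⟩ := exists_lipschitzWith_comp_norm_prod hh hhc
  rw [integral_congr_ae (coneDeriv_ae_eq_lineDeriv μ (hh.differentiable one_ne_zero) w)]
  exact integral_lineDeriv_eq_zero μ hC (hhc.comp_isClosedEmbedding isClosedEmbedding_norm_prod) w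

end ForwardCone

section ConeMeasure

/-- The measure `dμ(x) / ‖x‖` on the forward cone `{(t, x) | t = ‖x‖}`, parametrized by `x`. When
`μ` is the Lebesgue measure of `ℝ³`, it is `4π` times the forward fundamental solution of the
d'Alembertian. -/
def coneMeasure {E : Type*} [NormedAddCommGroup E] [MeasurableSpace E] (μ : Measure E) :
    Measure (ℝ × E) :=
  (μ.withDensity fun x => ENNReal.ofReal ‖x‖⁻¹).map fun x => (‖x‖, x)

lemma integral_coneMeasure {E F : Type*} [NormedAddCommGroup E] [MeasurableSpace E]
    [BorelSpace E] [SecondCountableTopology E] [NormedAddCommGroup F] [NormedSpace ℝ F]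
    (μ : Measure E) (f : ℝ × E → F) :
    ∫ p, f p ∂coneMeasure μ = ∫ x, ‖x‖⁻¹ • f (‖x‖, x) ∂μ := by
  rw [coneMeasure, isClosedEmbedding_norm_prod.measurableEmbedding.integral_map,
    integral_withDensity_eq_integral_toReal_smul (by fun_prop)
      (ae_of_all _ fun _ => ENNReal.ofReal_lt_top)]
  simp

variable {E : Type*} [NormedAddCommGroup E] [NormedSpace ℝ E] [FiniteDimensional ℝ E]
  [Nontrivial E] [MeasurableSpace E] [BorelSpace E] (μ : Measure E) [μ.IsAddHaarMeasure]

lemma lintegral_eq_lintegral_Ioi_lintegral_toSphere {g : E → ℝ≥0∞} (hg : Measurable g) :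
    ∫⁻ x, g x ∂μ = ∫⁻ r in Ioi (0 : ℝ),
      ENNReal.ofReal (r ^ (Module.finrank ℝ E - 1)) * ∫⁻ ω, g (r • (ω : E)) ∂μ.toSphere := by
  have hpolar (x : ({0}ᶜ : Set E)) :
      ((homeomorphUnitSphereProd E x).2 : ℝ) • ((homeomorphUnitSphereProd E x).1 : E) = x := by
    simp [smul_smul, norm_ne_zero_iff.mpr x.2]
  have hg' : Measurable fun q : sphere (0 : E) 1 × Ioi (0 : ℝ) => g ((q.2 : ℝ) • (q.1 : E)) :=
    hg.comp (by fun_prop)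
  calc ∫⁻ x, g x ∂μ
      = ∫⁻ x : ({0}ᶜ : Set E), g x ∂(μ.comap Subtype.val) := by
        rw [lintegral_subtype_comap (measurableSet_singleton _).compl, restrict_compl_singleton]
    _ = ∫⁻ q : sphere (0 : E) 1 × Ioi (0 : ℝ), g ((q.2 : ℝ) • (q.1 : E))
          ∂(μ.toSphere.prod (.volumeIoiPow (Module.finrank ℝ E - 1))) := by
        rw [← μ.measurePreserving_homeomorphUnitSphereProd.lintegral_comp hg']
        simp only [hpolar]
    _ = ∫⁻ r : Ioi (0 : ℝ), ENNReal.ofReal ((r : ℝ) ^ (Module.finrank ℝ E - 1)) *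
          ∫⁻ ω, g ((r : ℝ) • (ω : E)) ∂μ.toSphere ∂(volume.comap Subtype.val) := by
        rw [lintegral_prod_symm' _ hg', Measure.volumeIoiPow,
          lintegral_withDensity_eq_lintegral_mul _ (by fun_prop) hg'.lintegral_prod_left']
        rfl
    _ = _ := lintegral_subtype_comap measurableSet_Ioi fun r : ℝ =>
        ENNReal.ofReal (r ^ (Module.finrank ℝ E - 1)) * ∫⁻ ω, g (r • (ω : E)) ∂μ.toSphere

lemma coneMeasure_eq_map_prod_toSphere :
    coneMeasure μ = Measure.map (fun q : ℝ × sphere (0 : E) 1 => (q.1, q.1 • (q.2 : E)))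
      (((volume.restrict (Ioi 0)).withDensity fun r =>
        ENNReal.ofReal (r ^ (Module.finrank ℝ E - 1) * r⁻¹)).prod μ.toSphere) := by
  refine Measure.ext_of_lintegral _ fun f hf => ?_
  have hpolar : Measurable fun q : ℝ × sphere (0 : E) 1 => (q.1, q.1 • (q.2 : E)) := by fun_prop
  have hcone : Measurable fun x : E => (‖x‖, x) := by fun_prop
  have hfpolar : Measurable fun q : ℝ × sphere (0 : E) 1 => f (q.1, q.1 • (q.2 : E)) :=
    hf.comp hpolar
  have hfcone : Measurable fun x : E => f (‖x‖, x) := hf.comp hcone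
  rw [coneMeasure, lintegral_map hf hcone, lintegral_map hf hpolar,
    lintegral_prod _ hfpolar.aemeasurable,
    lintegral_withDensity_eq_lintegral_mul _ (by fun_prop) hfcone,
    lintegral_withDensity_eq_lintegral_mul _ (by fun_prop) hfpolar.lintegral_prod_right',
    lintegral_eq_lintegral_Ioi_lintegral_toSphere μ (.mul (by fun_prop) hfcone)]
  refine setLIntegral_congr_fun measurableSet_Ioi fun r (hr : 0 < r) => ?_
  have hnorm (ω : sphere (0 : E) 1) : ‖r • (ω : E)‖ = r := by
    simp [norm_smul, abs_of_pos hr]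
  simp only [Pi.mul_apply, hnorm]
  rw [lintegral_const_mul _ (by fun_prop), ← mul_assoc, ← ENNReal.ofReal_mul (by positivity)]

lemma Ymeas_eq_smul_coneMeasure :
    Ymeas = ENNReal.ofReal (4 * π)⁻¹ • coneMeasure (volume : Measure E3) := by
  have hdensity : (fun t : ℝ => ENNReal.ofReal (t / (4 * π)))
      = ENNReal.ofReal (4 * π)⁻¹ • fun t : ℝ =>
        ENNReal.ofReal (t ^ (Module.finrank ℝ E3 - 1) * t⁻¹) := by
    ext t
    rw [Pi.smul_apply, smul_eq_mul, ← ENNReal.ofReal_mul (by positivity),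
      finrank_euclideanSpace_fin]
    congr 1
    obtain rfl | ht := eq_or_ne t 0
    · simp
    · field_simp
  rw [Ymeas, sphMeasure, hdensity, withDensity_smul _ (by fun_prop), Measure.prod_smul_left,
    Measure.map_smul, coneMeasure_eq_map_prod_toSphere]

end ConeMeasure

theorem second_cone_identity_general {E : Type*} [NormedAddCommGroup E] [InnerProductSpace ℝ E]
    [FiniteDimensional ℝ E] [Nontrivial E] [MeasurableSpace E] [BorelSpace E]
    (μ : Measure E) [μ.IsAddHaarMeasure] (v e : E) {φ : ℝ × E → ℝ}
    (hφ : ContDiff ℝ 1 φ) (hφc : HasCompactSupport φ) :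
    ∫ p, p.1 * (⟪p.2, v⟫ - p.1) * fderiv ℝ φ p (0, e) ∂coneMeasure μ
      = ∫ p, (⟪p.2, e⟫ * φ p + p.1 * ⟪p.2, e⟫ * fderiv ℝ φ p (1, v)) ∂coneMeasure μ := by
  set L : E → ℝ := fun x => ‖x‖⁻¹ * (‖x‖ * (⟪x, v⟫ - ‖x‖) * fderiv ℝ φ (‖x‖, x) (0, e))
  set D : E → ℝ := fun x => coneDeriv e (fun p => (⟪p.2, v⟫ - p.1) * φ p) x
    - coneDeriv v (fun p => ⟪p.2, e⟫ * φ p) x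
  have hL : Integrable L μ := by
    have : Continuous (fderiv ℝ φ) := hφ.continuous_fderiv one_ne_zero
    refine (integrable_comp_norm_prod μ (f := fun p => (⟪p.2, v⟫ - p.1) * fderiv ℝ φ p (0, e))
      (by fun_prop) (hφc.fderiv_apply (𝕜 := ℝ) _).mul_left).congr ?_
    filter_upwards [Measure.ae_ne μ 0] with x hx
    simp [L, mul_assoc, hx]
  have hφ₁ : ContDiff ℝ 1 fun p : ℝ × E => (⟪p.2, v⟫ - p.1) * φ p :=
    ((contDiff_snd.inner ℝ contDiff_const).sub contDiff_fst).mul hφ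
  have hφ₂ : ContDiff ℝ 1 fun p : ℝ × E => ⟪p.2, e⟫ * φ p :=
    (contDiff_snd.inner ℝ contDiff_const).mul hφ
  have hD₁ := integrable_coneDeriv μ hφ₁ hφc.mul_left e
  have hD₂ := integrable_coneDeriv μ hφ₂ hφc.mul_left v
  have hD : Integrable D μ := hD₁.sub hD₂
  have hD_integral : ∫ x, D x ∂μ = 0 := by
    rw [integral_sub hD₁ hD₂, integral_coneDeriv_eq_zero μ hφ₁ hφc.mul_left,
      integral_coneDeriv_eq_zero μ hφ₂ hφc.mul_left, sub_zero]
  simp only [integral_coneMeasure, smul_eq_mul]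
  calc ∫ x, L x ∂μ
      = ∫ x, (L x - D x) ∂μ := by rw [integral_sub hL hD, hD_integral, sub_zero]
    _ = _ := integral_congr_ae <| by
        filter_upwards [Measure.ae_ne μ 0] with x hx
        simp only [L, D, coneDeriv_sub_coneDeriv_eq v e hx (hφ.differentiable one_ne_zero _),
          sub_sub_cancel]

/-- **Second cone identity for the streaming operator**: for `|v| < 1`, `i ∈ {1,2,3}`
and every `φ ∈ C_c^∞(ℝ⁴)`, `⟨Y, t(x·v - t) ∂_{x_i}φ⟩ = ⟨Y, x_i φ + t x_i (∂ₜ + v·∇ₓ)φ⟩`,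
i.e. `t(x·v - t) ∂_{x_i}Y = t x_i T Y` in the sense of distributions on `ℝ⁴`. -/
theorem second_cone_identity (v : E3) (hv : ‖v‖ < 1) (i : Fin 3) (φ : ℝ × E3 → ℝ)
    (hφ : ContDiff ℝ (⊤ : ℕ∞) φ) (hφc : HasCompactSupport φ) :
    ∫ p : ℝ × E3, p.1 * (⟪p.2, v⟫ - p.1) * dx4 i φ p ∂Ymeas
      = ∫ p : ℝ × E3, (p.2 i * φ p + p.1 * p.2 i * Tstr v φ p) ∂Ymeas := by
  rw [Ymeas_eq_smul_coneMeasure, integral_smul_measure, integral_smul_measure]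
  congr 1
  simpa [dx4, Tstr, e3, EuclideanSpace.inner_single_right] using
    second_cone_identity_general volume v (e3 i) (hφ.of_le (by simp)) hφc
end
end

section
/- Division lemma, first order: let v ∈ ℝ³ with |v| < 1 and i ∈ {0,1,2,3}. Then for every φ ∈ C_c^∞(ℝ⁴), ⟨Y, ∂_i φ⟩ = ⟨Y, α_i (∂_t + v·∇_x)φ + ((∂_t + v·∇_x)α_i) φ⟩, where all integrands are integrable against the cone measure Y; that is, ∂_i Y = T(α_i Y) + (−Tα_i) Y = α_i T Y in the sense of distributions on ℝ⁴. -/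
open MeasureTheory Real Set Filter Metric RealInnerProductSpace
open scoped ENNReal NNReal Topology

noncomputable section

/-- The four coordinate directions of `ℝ⁴ = ℝₜ × ℝ³ₓ` (with `x₀ = t`). -/
def dir4 : Fin 4 → ℝ × E3 :=
  Fin.cons ((1 : ℝ), (0 : E3)) fun j : Fin 3 => ((0 : ℝ), e3 j)

/-- The functions `α₀(t,x) = t/(t - x·v)` and `α_i(t,x) = x_i/(x·v - t)`, `i = 1,2,3`. -/
def alphaF (v : E3) : Fin 4 → ℝ × E3 → ℝ :=
  Fin.cons (fun p => p.1 / (p.1 - ⟪p.2, v⟫)) fun (j : Fin 3) p => p.2 j / (⟪p.2, v⟫ - p.1)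

/-- `Tα_i`, the streaming derivative of `α_i`. -/
def TalphaF (v : E3) (i : Fin 4) (p : ℝ × E3) : ℝ := fderiv ℝ (alphaF v i) p ((1 : ℝ), v)

/-!
The cone is the limit as `ε → 0` of the hyperboloids `t² - |x|² = ε²`, each carrying the
Lorentz-invariant measure `dx / t`; the limit of these measures is `4π Y`. Put `u = (1, v)` and let
`d` be a coordinate direction. The function `α` of the statement is exactly the one for which
`d - α u` is Minkowski-orthogonal to the position vector, that is, tangent to every hyperboloid.
Hence `∂_d φ - ∂_u (α φ)` times `dx / t` is a divergence in the coordinate `x` and integrates to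
zero over each hyperboloid with `ε ≠ 0`. All integrands are `O(1 / t)` near the apex, so they are
dominated by `C / |x|²` on a ball of `ℝ³` and `ε` can be sent to `0` by dominated convergence.
-/

section Polar

variable {E : Type*} [NormedAddCommGroup E] [NormedSpace ℝ E] [FiniteDimensional ℝ E]
  [MeasurableSpace E] [BorelSpace E] (μ : Measure E) [μ.IsAddHaarMeasure]

theorem lintegral_eq_lintegral_sphere_lintegral_Ioi [Nontrivial E] {f : E → ℝ≥0∞}
    (hf : Measurable f) :
    ∫⁻ x, f x ∂μ = ∫⁻ ω : sphere (0 : E) 1, (∫⁻ r in Ioi (0 : ℝ),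
      ENNReal.ofReal (r ^ (Module.finrank ℝ E - 1)) * f (r • (ω : E))) ∂μ.toSphere := by
  let e := (homeomorphUnitSphereProd E).toMeasurableEquiv
  have hfe : Measurable fun q => f (e.symm q : E) :=
    (hf.comp measurable_subtype_coe).comp e.symm.measurable
  calc ∫⁻ x, f x ∂μ = ∫⁻ x : ({0}ᶜ : Set E), f x ∂μ.comap (↑) := by
        rw [lintegral_subtype_comap (measurableSet_singleton _).compl f, restrict_compl_singleton]
    _ = ∫⁻ q, f (e.symm q : E)
          ∂μ.toSphere.prod (Measure.volumeIoiPow (Module.finrank ℝ E - 1)) :=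
        ((μ.measurePreserving_homeomorphUnitSphereProd.symm e).lintegral_comp
          (hf.comp measurable_subtype_coe)).symm
    _ = _ := by
        rw [lintegral_prod _ hfe.aemeasurable]
        refine lintegral_congr fun ω => ?_
        rw [Measure.volumeIoiPow, ← lintegral_subtype_comap measurableSet_Ioi]
        exact lintegral_withDensity_eq_lintegral_mul _ (by fun_prop)
          (hfe.comp measurable_prodMk_left)

theorem integrableOn_ball_inv_norm_pow {k : ℕ} (hk : k < Module.finrank ℝ E) (R : ℝ) :
    IntegrableOn (fun x : E => (‖x‖ ^ k)⁻¹) (ball 0 R) μ := by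
  have : Nontrivial E := Module.nontrivial_of_finrank_pos (R := ℝ) (by lia)
  refine (integrableOn_fun_norm_addHaar μ (f := fun r : ℝ => (r ^ k)⁻¹)).2 ?_
  have hcont : IntegrableOn (fun r : ℝ => r ^ (Module.finrank ℝ E - 1 - k)) (Ioo 0 R) :=
    ((continuous_pow _).integrableOn_Icc (a := 0)).mono_set Ioo_subset_Icc_self
  refine hcont.congr_fun (fun r hr => ?_) measurableSet_Ioo
  exact pow_sub₀ r hr.1.ne' (by lia)

theorem integral_fderiv_eq_zero {f : E → ℝ} (hf : ContDiff ℝ 1 f) (hfc : HasCompactSupport f)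
    (w : E) : ∫ x, fderiv ℝ f x w ∂μ = 0 := by
  have hint : Integrable (fun x => fderiv ℝ f x w) μ :=
    ((hf.continuous_fderiv one_ne_zero).clm_apply continuous_const).integrable_of_hasCompactSupport
      (hfc.fderiv_apply ℝ w)
  have h := integral_mul_fderiv_eq_neg_fderiv_mul_of_integrable (μ := μ)
    (f := fun _ : E => (1 : ℝ)) (g := f) (v := w) (by simp) (by simpa using hint)
    (by simpa using hf.continuous.integrable_of_hasCompactSupport hfc)
    (fun x _ => differentiableAt_const (1 : ℝ))
    (fun x _ => hf.differentiable one_ne_zero x)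
  simpa using h

end Polar

section Hyperboloid

variable {E : Type*} [NormedAddCommGroup E] {ε : ℝ} {x : E}

/-- The time coordinate `√(|x|² + ε²)` of the point above `x` on the hyperboloid
`t² - |x|² = ε²`, `t ≥ 0`, which is the forward light cone for `ε = 0`. -/
def hyperboloidHeight (ε : ℝ) (x : E) : ℝ := √(‖x‖ ^ 2 + ε ^ 2)

/-- The parametrization `x ↦ (√(|x|² + ε²), x)` of the hyperboloid `t² - |x|² = ε²`, `t ≥ 0`. -/
def hyperboloidChart (ε : ℝ) (x : E) : ℝ × E := (hyperboloidHeight ε x, x)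

/-- The density, in the coordinate `x`, of a function `F` times the Lorentz-invariant measure
`dx / t` on the hyperboloid `t² - |x|² = ε²`. -/
def hyperboloidDensity (ε : ℝ) (F : ℝ × E → ℝ) (x : E) : ℝ :=
  F (hyperboloidChart ε x) / hyperboloidHeight ε x

variable (E) in
/-- The solid forward light cone `|x| ≤ t` without its apex. -/
def forwardCone : Set (ℝ × E) := {p | ‖p.2‖ ≤ p.1 ∧ 0 < p.1}

@[simp]
theorem hyperboloidHeight_zero (x : E) : hyperboloidHeight 0 x = ‖x‖ := by
  simp [hyperboloidHeight]

theorem continuous_hyperboloidHeight :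
    Continuous fun q : ℝ × E => hyperboloidHeight q.1 q.2 := by
  unfold hyperboloidHeight
  fun_prop

theorem norm_le_hyperboloidHeight (ε : ℝ) (x : E) : ‖x‖ ≤ hyperboloidHeight ε x :=
  Real.le_sqrt_of_sq_le (by nlinarith [sq_nonneg ε])

theorem hyperboloidHeight_nonneg (ε : ℝ) (x : E) : 0 ≤ hyperboloidHeight ε x :=
  Real.sqrt_nonneg _

theorem hyperboloidHeight_pos (h : ε ≠ 0 ∨ x ≠ 0) : 0 < hyperboloidHeight ε x := by
  rcases h with hε | hx
  · exact Real.sqrt_pos.2 (by positivity)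
  · exact (norm_pos_iff.2 hx).trans_le (norm_le_hyperboloidHeight ε x)

theorem continuous_hyperboloidChart (ε : ℝ) : Continuous (hyperboloidChart (E := E) ε) :=
  (continuous_hyperboloidHeight.comp (Continuous.prodMk_right ε)).prodMk continuous_id

theorem isClosedEmbedding_hyperboloidChart (ε : ℝ) :
    Topology.IsClosedEmbedding (hyperboloidChart (E := E) ε) :=
  Function.LeftInverse.isClosedEmbedding (f := Prod.snd) (fun _ => rfl) continuous_snd
    (continuous_hyperboloidChart ε)

theorem hyperboloidChart_mem_forwardCone (h : ε ≠ 0 ∨ x ≠ 0) :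
    hyperboloidChart ε x ∈ forwardCone E :=
  ⟨norm_le_hyperboloidHeight ε x, hyperboloidHeight_pos h⟩

theorem hasCompactSupport_hyperboloidDensity {F : ℝ × E → ℝ} (hF : HasCompactSupport F) (ε : ℝ) :
    HasCompactSupport (hyperboloidDensity ε F) := by
  have h := hF.comp_isClosedEmbedding (isClosedEmbedding_hyperboloidChart ε)
  exact h.mono' (fun x hx => subset_tsupport _ fun h0 => hx (by
    simpa [hyperboloidDensity] using Or.inl h0))

end Hyperboloid

section HyperboloidMeasure

variable {E : Type*} [NormedAddCommGroup E] [MeasurableSpace E]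

/-- The Lorentz-invariant measure `dx / t` on the hyperboloid `t² - |x|² = ε²`, `t ≥ 0`, normalized
by the measure `μ` on space. For `ε = 0` it is carried by the forward light cone. -/
def hyperboloidMeasure (μ : Measure E) (ε : ℝ) : Measure (ℝ × E) :=
  (μ.withDensity fun x => ENNReal.ofReal (hyperboloidHeight ε x)⁻¹).map (hyperboloidChart ε)

variable [BorelSpace E]

theorem measurable_inv_hyperboloidHeight (ε : ℝ) :
    Measurable fun x : E => ENNReal.ofReal (hyperboloidHeight ε x)⁻¹ := by
  have h := (continuous_hyperboloidHeight.comp (Continuous.prodMk_right (Y := E) ε)).measurable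
  exact h.inv.ennreal_ofReal

variable [SecondCountableTopology E]

theorem lintegral_hyperboloidMeasure (μ : Measure E) (ε : ℝ) {F : ℝ × E → ℝ≥0∞}
    (hF : Measurable F) :
    ∫⁻ p, F p ∂hyperboloidMeasure μ ε
      = ∫⁻ x, ENNReal.ofReal (hyperboloidHeight ε x)⁻¹ * F (hyperboloidChart ε x) ∂μ := by
  have hchart := (continuous_hyperboloidChart (E := E) ε).measurable
  rw [hyperboloidMeasure, lintegral_map hF hchart]
  exact lintegral_withDensity_eq_lintegral_mul _ (measurable_inv_hyperboloidHeight ε)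
    (hF.comp hchart)

theorem integrable_hyperboloidMeasure_iff {μ : Measure E} {ε : ℝ} {F : ℝ × E → ℝ} :
    Integrable F (hyperboloidMeasure μ ε) ↔ Integrable (hyperboloidDensity ε F) μ := by
  rw [hyperboloidMeasure,
    (isClosedEmbedding_hyperboloidChart ε).measurableEmbedding.integrable_map_iff,
    integrable_withDensity_iff (measurable_inv_hyperboloidHeight ε) (by simp)]
  simp only [ENNReal.toReal_ofReal (inv_nonneg.2 (hyperboloidHeight_nonneg ε _))]
  rfl

theorem integral_hyperboloidMeasure (μ : Measure E) (ε : ℝ) (F : ℝ × E → ℝ) :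
    ∫ p, F p ∂hyperboloidMeasure μ ε = ∫ x, hyperboloidDensity ε F x ∂μ := by
  rw [hyperboloidMeasure,
    (isClosedEmbedding_hyperboloidChart ε).measurableEmbedding.integral_map,
    integral_withDensity_eq_integral_toReal_smul (measurable_inv_hyperboloidHeight ε) (by simp)]
  simp only [ENNReal.toReal_ofReal (inv_nonneg.2 (hyperboloidHeight_nonneg ε _)), smul_eq_mul,
    hyperboloidDensity, div_eq_inv_mul]

end HyperboloidMeasure

section ConeIntegrand

variable {E : Type*} [NormedAddCommGroup E]

/-- The class of functions, at worst of size `1 / t` near the apex of the forward light cone, whose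
integrals over the hyperboloids `t² - |x|² = ε²` converge to that over the cone as `ε → 0`. -/
structure IsConeIntegrand (F : ℝ × E → ℝ) : Prop where
  hasCompactSupport : HasCompactSupport F
  continuousOn : ContinuousOn F (forwardCone E)
  exists_bound : ∃ C, ∀ p ∈ forwardCone E, |p.1 * F p| ≤ C

namespace IsConeIntegrand

variable {F G : ℝ × E → ℝ}

theorem add (hF : IsConeIntegrand F) (hG : IsConeIntegrand G) :
    IsConeIntegrand fun p => F p + G p where
  hasCompactSupport := hF.hasCompactSupport.add hG.hasCompactSupport
  continuousOn := hF.continuousOn.add hG.continuousOn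
  exists_bound := by
    obtain ⟨C, hC⟩ := hF.exists_bound
    obtain ⟨D, hD⟩ := hG.exists_bound
    refine ⟨C + D, fun p hp => ?_⟩
    rw [mul_add]
    exact (abs_add_le _ _).trans (add_le_add (hC p hp) (hD p hp))

theorem of_mul {b g w : ℝ × E → ℝ} (hb : ContinuousOn b (forwardCone E)) (hw : Continuous w)
    (hbw : ∀ p ∈ forwardCone E, |p.1 * b p| ≤ w p) (hg : Continuous g)
    (hgc : HasCompactSupport g) : IsConeIntegrand fun p => b p * g p where
  hasCompactSupport := hgc.mul_left
  continuousOn := hb.mul hg.continuousOn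
  exists_bound := by
    obtain ⟨C, hC⟩ := (hw.mul hg).bounded_above_of_compact_support hgc.mul_left
    refine ⟨C, fun p hp => ?_⟩
    calc |p.1 * (b p * g p)| = |p.1 * b p| * |g p| := by rw [← mul_assoc, abs_mul]
      _ ≤ |w p| * |g p| :=
        mul_le_mul_of_nonneg_right ((hbw p hp).trans (le_abs_self _)) (abs_nonneg _)
      _ ≤ C := by rw [← abs_mul]; exact hC p

theorem of_continuous (hF : Continuous F) (hFc : HasCompactSupport F) : IsConeIntegrand F := by
  simpa using of_mul (b := fun _ => 1) continuousOn_const continuous_fst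
    (fun p hp => by simp [abs_of_pos hp.2]) hF hFc

theorem exists_abs_hyperboloidDensity_le (hF : IsConeIntegrand F) :
    ∃ C R : ℝ, ∀ (ε : ℝ) (x : E), x ≠ 0 →
      |hyperboloidDensity ε F x| ≤ (ball 0 R).indicator (fun x => C * (‖x‖ ^ 2)⁻¹) x := by
  obtain ⟨C, hC⟩ := hF.exists_bound
  obtain ⟨R, hR⟩ := hF.hasCompactSupport.isCompact.isBounded.subset_ball 0
  refine ⟨C, R, fun ε x hx => ?_⟩
  have hmem : hyperboloidChart ε x ∈ forwardCone E := hyperboloidChart_mem_forwardCone (.inr hx)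
  have hpos : 0 < hyperboloidHeight ε x := hmem.2
  have hbound : |hyperboloidHeight ε x * F (hyperboloidChart ε x)| ≤ C := hC _ hmem
  by_cases hxR : x ∈ ball 0 R
  · rw [indicator_of_mem hxR]
    calc |hyperboloidDensity ε F x|
        = |hyperboloidHeight ε x * F (hyperboloidChart ε x)| * (hyperboloidHeight ε x ^ 2)⁻¹ := by
          rw [hyperboloidDensity, abs_div, abs_mul, abs_of_pos hpos]
          field_simp
      _ ≤ C * (‖x‖ ^ 2)⁻¹ := by
          have := norm_pos_iff.2 hx
          gcongr
          · exact (abs_nonneg _).trans hbound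
          · exact norm_le_hyperboloidHeight ε x
  · have hzero : F (hyperboloidChart ε x) = 0 := image_eq_zero_of_notMem_tsupport fun h =>
      hxR (mem_ball_zero_iff.2 ((norm_snd_le (hyperboloidChart ε x)).trans_lt
        (mem_ball_zero_iff.1 (hR h))))
    rw [indicator_of_notMem hxR, hyperboloidDensity, hzero, zero_div, abs_zero]

theorem continuousOn_hyperboloidDensity (hF : IsConeIntegrand F) (ε : ℝ) :
    ContinuousOn (hyperboloidDensity ε F) {0}ᶜ :=
  (hF.continuousOn.comp (continuous_hyperboloidChart ε).continuousOn
    fun _ hx => hyperboloidChart_mem_forwardCone (.inr hx)).div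
    (continuous_hyperboloidHeight.comp (Continuous.prodMk_right ε)).continuousOn
    fun _ hx => (hyperboloidHeight_pos (.inr hx)).ne'

theorem tendsto_hyperboloidDensity (hF : IsConeIntegrand F) {x : E} (hx : x ≠ 0) :
    Tendsto (fun ε => hyperboloidDensity ε F x) (𝓝 0) (𝓝 (hyperboloidDensity 0 F x)) := by
  have hheight : Tendsto (fun ε => hyperboloidHeight ε x) (𝓝 0) (𝓝 (hyperboloidHeight 0 x)) :=
    (continuous_hyperboloidHeight.comp (Continuous.prodMk_left x)).tendsto 0
  have hchart : Tendsto (fun ε => hyperboloidChart ε x) (𝓝 0)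
      (𝓝[forwardCone E] hyperboloidChart 0 x) :=
    tendsto_nhdsWithin_iff.2 ⟨hheight.prodMk_nhds tendsto_const_nhds,
      .of_forall fun _ => hyperboloidChart_mem_forwardCone (.inr hx)⟩
  exact ((hF.continuousOn _ (hyperboloidChart_mem_forwardCone (.inr hx))).tendsto.comp hchart).div
    hheight (hyperboloidHeight_pos (.inr hx)).ne'

variable [NormedSpace ℝ E] [FiniteDimensional ℝ E] [MeasurableSpace E] [BorelSpace E]
  (μ : Measure E) [μ.IsAddHaarMeasure]

theorem integrable_of_ne_zero (hF : IsConeIntegrand F) {ε : ℝ} (hε : ε ≠ 0) :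
    Integrable F (hyperboloidMeasure μ ε) := by
  have hcont : Continuous (hyperboloidDensity ε F) :=
    (hF.continuousOn.comp_continuous (continuous_hyperboloidChart ε)
      fun _ => hyperboloidChart_mem_forwardCone (.inl hε)).div₀
      (continuous_hyperboloidHeight.comp (Continuous.prodMk_right ε))
      fun _ => (hyperboloidHeight_pos (.inl hε)).ne'
  exact integrable_hyperboloidMeasure_iff.2 (hcont.integrable_of_hasCompactSupport
    (hasCompactSupport_hyperboloidDensity hF.hasCompactSupport ε))

theorem exists_integrable_bound (hF : IsConeIntegrand F) (hE : 2 < Module.finrank ℝ E) :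
    ∃ g : E → ℝ, Integrable g μ ∧ ∀ ε, ∀ᵐ x ∂μ, ‖hyperboloidDensity ε F x‖ ≤ g x := by
  have : Nontrivial E := Module.nontrivial_of_finrank_pos (R := ℝ) (by lia)
  obtain ⟨C, R, hCR⟩ := hF.exists_abs_hyperboloidDensity_le
  refine ⟨_, (integrable_indicator_iff measurableSet_ball).2
    ((integrableOn_ball_inv_norm_pow μ hE R).const_mul C), fun ε => ?_⟩
  filter_upwards [Measure.ae_ne μ 0] with x hx using hCR ε x hx

theorem aestronglyMeasurable_hyperboloidDensity [Nontrivial E] (hF : IsConeIntegrand F) (ε : ℝ) :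
    AEStronglyMeasurable (hyperboloidDensity ε F) μ := by
  simpa using (hF.continuousOn_hyperboloidDensity ε).aestronglyMeasurable (μ := μ)
    (measurableSet_singleton (0 : E)).compl

theorem integrable (hF : IsConeIntegrand F) (hE : 2 < Module.finrank ℝ E) (ε : ℝ) :
    Integrable F (hyperboloidMeasure μ ε) := by
  have : Nontrivial E := Module.nontrivial_of_finrank_pos (R := ℝ) (by lia)
  obtain ⟨g, hg, hFg⟩ := hF.exists_integrable_bound μ hE
  exact integrable_hyperboloidMeasure_iff.2
    (hg.mono' (hF.aestronglyMeasurable_hyperboloidDensity μ ε) (hFg ε))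

theorem tendsto_integral (hF : IsConeIntegrand F) (hE : 2 < Module.finrank ℝ E) :
    Tendsto (fun ε => ∫ p, F p ∂hyperboloidMeasure μ ε) (𝓝 0)
      (𝓝 (∫ p, F p ∂hyperboloidMeasure μ 0)) := by
  have : Nontrivial E := Module.nontrivial_of_finrank_pos (R := ℝ) (by lia)
  obtain ⟨g, hg, hFg⟩ := hF.exists_integrable_bound μ hE
  simp only [integral_hyperboloidMeasure]
  refine tendsto_integral_filter_of_dominated_convergence g
    (.of_forall (hF.aestronglyMeasurable_hyperboloidDensity μ)) (.of_forall hFg) hg ?_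
  filter_upwards [Measure.ae_ne μ 0] with x hx using hF.tendsto_hyperboloidDensity hx

end IsConeIntegrand

end ConeIntegrand

section Quotient

variable {F : Type*} [NormedAddCommGroup F] [NormedSpace ℝ F]

theorem hasFDerivAt_fun_div {f g : F → ℝ} {f' g' : F →L[ℝ] ℝ} {x : F} (hf : HasFDerivAt f f' x)
    (hg : HasFDerivAt g g' x) (hx : g x ≠ 0) :
    HasFDerivAt (fun y => f y / g y) ((g x)⁻¹ • (f' - (f x / g x) • g')) x := by
  have hinv : HasFDerivAt (fun y => (g y)⁻¹) (-(g x ^ 2)⁻¹ • g') x :=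
    (hasDerivAt_inv hx).comp_hasFDerivAt x hg
  simp only [div_eq_mul_inv]
  refine (hf.fun_mul hinv).congr_fderiv ?_
  ext w
  simp only [add_apply, sub_apply, smul_apply, smul_eq_mul]
  ring

end Quotient

section Minkowski

variable {E : Type*} [NormedAddCommGroup E] [InnerProductSpace ℝ E]

/-- The Minkowski inner product `d₀ t - d'·x` of `d = (d₀, d')` and `p = (t, x)`, as a linear form
in `p`. -/
def minkowskiForm (d : ℝ × E) : ℝ × E →L[ℝ] ℝ :=
  d.1 • ContinuousLinearMap.fst ℝ ℝ E - innerSL ℝ d.2 ∘L ContinuousLinearMap.snd ℝ ℝ E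

/-- The coefficient `α` for which the vector field `d - α u` is Minkowski-orthogonal to the position
vector, hence tangent to the hyperboloids `t² - |x|² = ε²`. -/
def tangencyCoeff (u d p : ℝ × E) : ℝ := minkowskiForm d p / minkowskiForm u p

theorem minkowskiForm_apply (d p : ℝ × E) : minkowskiForm d p = d.1 * p.1 - ⟪d.2, p.2⟫ := by
  simp [minkowskiForm]

theorem mul_le_minkowskiForm (u : ℝ × E) {p : ℝ × E} (hp : p ∈ forwardCone E) :
    (u.1 - ‖u.2‖) * p.1 ≤ minkowskiForm u p := by
  have hinner : ⟪u.2, p.2⟫ ≤ ‖u.2‖ * p.1 :=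
    (real_inner_le_norm _ _).trans (mul_le_mul_of_nonneg_left hp.1 (norm_nonneg _))
  rw [minkowskiForm_apply]
  linarith

theorem abs_minkowskiForm_le (d : ℝ × E) {p : ℝ × E} (hp : p ∈ forwardCone E) :
    |minkowskiForm d p| ≤ (|d.1| + ‖d.2‖) * p.1 := by
  have hinner : |⟪d.2, p.2⟫| ≤ ‖d.2‖ * p.1 :=
    (abs_real_inner_le_norm _ _).trans (mul_le_mul_of_nonneg_left hp.1 (norm_nonneg _))
  calc |minkowskiForm d p| ≤ |d.1 * p.1| + |⟪d.2, p.2⟫| := by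
        rw [minkowskiForm_apply]; exact abs_sub _ _
    _ ≤ |d.1| * p.1 + ‖d.2‖ * p.1 := by rw [abs_mul, abs_of_pos hp.2]; gcongr
    _ = (|d.1| + ‖d.2‖) * p.1 := by ring

variable {u : ℝ × E}

theorem minkowskiForm_pos (hu : ‖u.2‖ < u.1) {p : ℝ × E} (hp : p ∈ forwardCone E) :
    0 < minkowskiForm u p :=
  (mul_pos (sub_pos.2 hu) hp.2).trans_le (mul_le_minkowskiForm u hp)

theorem hasFDerivAt_tangencyCoeff (d : ℝ × E) {p : ℝ × E} (hp : minkowskiForm u p ≠ 0) :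
    HasFDerivAt (tangencyCoeff u d)
      ((minkowskiForm u p)⁻¹ • (minkowskiForm d - tangencyCoeff u d p • minkowskiForm u)) p :=
  hasFDerivAt_fun_div (minkowskiForm d).hasFDerivAt (minkowskiForm u).hasFDerivAt hp

theorem fderiv_tangencyCoeff (d w : ℝ × E) {p : ℝ × E} (hp : minkowskiForm u p ≠ 0) :
    fderiv ℝ (tangencyCoeff u d) p w
      = (minkowskiForm d w - tangencyCoeff u d p * minkowskiForm u w) / minkowskiForm u p := by
  simp [(hasFDerivAt_tangencyCoeff d hp).fderiv, div_eq_inv_mul]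

theorem contDiffAt_tangencyCoeff {n : WithTop ℕ∞} (d : ℝ × E) {p : ℝ × E}
    (hp : minkowskiForm u p ≠ 0) : ContDiffAt ℝ n (tangencyCoeff u d) p :=
  (minkowskiForm d).contDiff.contDiffAt.div (minkowskiForm u).contDiff.contDiffAt hp

theorem continuousOn_tangencyCoeff (hu : ‖u.2‖ < u.1) (d : ℝ × E) :
    ContinuousOn (tangencyCoeff u d) (forwardCone E) :=
  (minkowskiForm d).continuous.continuousOn.div (minkowskiForm u).continuous.continuousOn
    fun _ hp => (minkowskiForm_pos hu hp).ne'

theorem continuousOn_fderiv_tangencyCoeff (hu : ‖u.2‖ < u.1) (d w : ℝ × E) :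
    ContinuousOn (fun p => fderiv ℝ (tangencyCoeff u d) p w) (forwardCone E) :=
  ((continuousOn_const.sub ((continuousOn_tangencyCoeff hu d).mul continuousOn_const)).div
    (minkowskiForm u).continuous.continuousOn fun _ hp => (minkowskiForm_pos hu hp).ne').congr
    fun _ hp => fderiv_tangencyCoeff d w (minkowskiForm_pos hu hp).ne'

theorem abs_tangencyCoeff_le (hu : ‖u.2‖ < u.1) (d : ℝ × E) {p : ℝ × E}
    (hp : p ∈ forwardCone E) :
    |tangencyCoeff u d p| ≤ (|d.1| + ‖d.2‖) / (u.1 - ‖u.2‖) := by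
  have ht : 0 < p.1 := hp.2
  calc |tangencyCoeff u d p| = |minkowskiForm d p| / minkowskiForm u p := by
        rw [tangencyCoeff, abs_div, abs_of_pos (minkowskiForm_pos hu hp)]
    _ ≤ (|d.1| + ‖d.2‖) * p.1 / ((u.1 - ‖u.2‖) * p.1) := by
        gcongr
        exacts [abs_minkowskiForm_le d hp, mul_le_minkowskiForm u hp]
    _ = (|d.1| + ‖d.2‖) / (u.1 - ‖u.2‖) := mul_div_mul_right _ _ ht.ne'

theorem abs_mul_fderiv_tangencyCoeff_le (hu : ‖u.2‖ < u.1) (d w : ℝ × E) {p : ℝ × E}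
    (hp : p ∈ forwardCone E) :
    |p.1 * fderiv ℝ (tangencyCoeff u d) p w| ≤ (|minkowskiForm d w| +
      (|d.1| + ‖d.2‖) / (u.1 - ‖u.2‖) * |minkowskiForm u w|) / (u.1 - ‖u.2‖) := by
  have hk : 0 < u.1 - ‖u.2‖ := sub_pos.2 hu
  have hQ : 0 < minkowskiForm u p := minkowskiForm_pos hu hp
  have hratio : p.1 / minkowskiForm u p ≤ 1 / (u.1 - ‖u.2‖) := by
    rw [div_le_div_iff₀ hQ hk, one_mul, mul_comm]
    exact mul_le_minkowskiForm u hp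
  have hnum : |minkowskiForm d w - tangencyCoeff u d p * minkowskiForm u w| ≤
      |minkowskiForm d w| + (|d.1| + ‖d.2‖) / (u.1 - ‖u.2‖) * |minkowskiForm u w| := by
    refine (abs_sub _ _).trans (add_le_add_right ?_ _)
    rw [abs_mul]
    exact mul_le_mul_of_nonneg_right (abs_tangencyCoeff_le hu d hp) (abs_nonneg _)
  calc |p.1 * fderiv ℝ (tangencyCoeff u d) p w|
      = |minkowskiForm d w - tangencyCoeff u d p * minkowskiForm u w| *
          (p.1 / minkowskiForm u p) := by
        rw [fderiv_tangencyCoeff d w hQ.ne', abs_mul, abs_div, abs_of_pos hp.2, abs_of_pos hQ]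
        ring
    _ ≤ _ := by
        rw [div_eq_mul_one_div (_ + _) (u.1 - ‖u.2‖)]
        have := hp.2
        gcongr

end Minkowski

section Tangential

variable {E : Type*} [NormedAddCommGroup E] [InnerProductSpace ℝ E] {ε : ℝ}

theorem hasFDerivAt_hyperboloidHeight (hε : ε ≠ 0) (x : E) :
    HasFDerivAt (hyperboloidHeight ε) ((hyperboloidHeight ε x)⁻¹ • innerSL ℝ x) x := by
  have h := (((hasStrictFDerivAt_norm_sq x).hasFDerivAt).add_const (ε ^ 2)).sqrt (by positivity)
  refine h.congr_fderiv ?_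
  ext w
  simp only [one_div, mul_inv_rev, smul_apply, coe_innerSL_apply, nsmul_eq_mul, Nat.cast_ofNat,
    smul_eq_mul, hyperboloidHeight]
  ring

theorem contDiff_hyperboloidHeight {n : WithTop ℕ∞} (hε : ε ≠ 0) :
    ContDiff ℝ n (hyperboloidHeight (E := E) ε) :=
  ((contDiff_norm_sq ℝ).add contDiff_const).sqrt fun x => by positivity

theorem contDiff_hyperboloidDensity {n : WithTop ℕ∞} (hε : ε ≠ 0) {g : ℝ × E → ℝ}
    (hg : ∀ p ∈ forwardCone E, ContDiffAt ℝ n g p) : ContDiff ℝ n (hyperboloidDensity ε g) := by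
  have hheight : ContDiff ℝ n (hyperboloidHeight (E := E) ε) := contDiff_hyperboloidHeight hε
  refine contDiff_iff_contDiffAt.2 fun x => ?_
  exact ((hg _ (hyperboloidChart_mem_forwardCone (.inl hε))).comp x
    (hheight.prodMk contDiff_id).contDiffAt).div hheight.contDiffAt
    (hyperboloidHeight_pos (.inl hε)).ne'

theorem fderiv_hyperboloidDensity_apply (hε : ε ≠ 0) {g : ℝ × E → ℝ} {x : E}
    (hg : DifferentiableAt ℝ g (hyperboloidChart ε x)) (w : E) :
    fderiv ℝ (hyperboloidDensity ε g) x w =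
      (fderiv ℝ g (hyperboloidChart ε x) (⟪x, w⟫ / hyperboloidHeight ε x, w)
        - hyperboloidDensity ε g x * (⟪x, w⟫ / hyperboloidHeight ε x))
        / hyperboloidHeight ε x := by
  have hheight := hasFDerivAt_hyperboloidHeight hε x
  have hchart : HasFDerivAt (hyperboloidChart ε)
      (((hyperboloidHeight ε x)⁻¹ • innerSL ℝ x).prod (.id ℝ E)) x :=
    hheight.prodMk (hasFDerivAt_id x)
  have hdensity : HasFDerivAt (hyperboloidDensity ε g) _ x :=
    hasFDerivAt_fun_div (hg.hasFDerivAt.comp x hchart) hheight (hyperboloidHeight_pos (.inl hε)).ne'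
  rw [hdensity.fderiv]
  simp [div_eq_inv_mul, hyperboloidDensity]

-- The last two terms see `w` only through `minkowskiForm w * g`, so they cancel in a combination
-- of derivatives that is tangent to the hyperboloid.
theorem fderiv_hyperboloidDensity (hε : ε ≠ 0) {g : ℝ × E → ℝ} {x : E}
    (hg : DifferentiableAt ℝ g (hyperboloidChart ε x)) (w : ℝ × E) :
    fderiv ℝ (hyperboloidDensity ε g) x w.2 = hyperboloidDensity ε (fun p => fderiv ℝ g p w) x
      - fderiv ℝ (fun p => minkowskiForm w p * g p) (hyperboloidChart ε x) (1, 0)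
        / hyperboloidHeight ε x ^ 2
      + minkowskiForm w (hyperboloidChart ε x) * g (hyperboloidChart ε x)
        / hyperboloidHeight ε x ^ 3 := by
  have hτ : hyperboloidHeight ε x ≠ 0 := (hyperboloidHeight_pos (.inl hε)).ne'
  have hQ : minkowskiForm w (hyperboloidChart ε x) = w.1 * hyperboloidHeight ε x - ⟪x, w.2⟫ := by
    rw [minkowskiForm_apply, real_inner_comm]
    rfl
  have hlift : ((⟪x, w.2⟫ / hyperboloidHeight ε x, w.2) : ℝ × E) =
      w - (minkowskiForm w (hyperboloidChart ε x) / hyperboloidHeight ε x) • (1, 0) := by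
    ext
    · simp [hQ, sub_div, hτ]
    · simp
  have hprod : fderiv ℝ (fun p => minkowskiForm w p * g p) (hyperboloidChart ε x) (1, 0)
      = minkowskiForm w (hyperboloidChart ε x) * fderiv ℝ g (hyperboloidChart ε x) (1, 0)
        + w.1 * g (hyperboloidChart ε x) := by
    rw [fderiv_fun_mul (minkowskiForm w).differentiableAt hg]
    simp [minkowskiForm_apply, mul_comm]
  rw [fderiv_hyperboloidDensity_apply hε hg, hprod, hlift, map_sub, map_smul, smul_eq_mul, hQ,
    hyperboloidDensity, hyperboloidDensity]
  field_simp
  ring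

theorem fderiv_hyperboloidDensity_sub (hε : ε ≠ 0) {φ ψ : ℝ × E → ℝ} {d u : ℝ × E} {x : E}
    (hφ : DifferentiableAt ℝ φ (hyperboloidChart ε x))
    (hψ : DifferentiableAt ℝ ψ (hyperboloidChart ε x))
    (htangent : (fun p => minkowskiForm d p * φ p) =ᶠ[𝓝 (hyperboloidChart ε x)]
      fun p => minkowskiForm u p * ψ p) :
    fderiv ℝ (hyperboloidDensity ε φ) x d.2 - fderiv ℝ (hyperboloidDensity ε ψ) x u.2
      = hyperboloidDensity ε (fun p => fderiv ℝ φ p d - fderiv ℝ ψ p u) x := by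
  rw [fderiv_hyperboloidDensity hε hφ, fderiv_hyperboloidDensity hε hψ, htangent.fderiv_eq,
    htangent.eq_of_nhds]
  simp only [hyperboloidDensity]
  ring

variable [FiniteDimensional ℝ E] [MeasurableSpace E] [BorelSpace E] (μ : Measure E)
  [μ.IsAddHaarMeasure]

theorem integral_hyperboloidMeasure_fderiv_sub_eq_zero (hε : ε ≠ 0) {φ ψ : ℝ × E → ℝ}
    {d u : ℝ × E} (hφ : ∀ p ∈ forwardCone E, ContDiffAt ℝ 1 φ p) (hφc : HasCompactSupport φ)
    (hψ : ∀ p ∈ forwardCone E, ContDiffAt ℝ 1 ψ p) (hψc : HasCompactSupport ψ)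
    (htangent : ∀ p ∈ forwardCone E,
      (fun q => minkowskiForm d q * φ q) =ᶠ[𝓝 p] fun q => minkowskiForm u q * ψ q) :
    ∫ p, (fderiv ℝ φ p d - fderiv ℝ ψ p u) ∂hyperboloidMeasure μ ε = 0 := by
  have hmem : ∀ x : E, hyperboloidChart ε x ∈ forwardCone E := fun _ =>
    hyperboloidChart_mem_forwardCone (.inl hε)
  have hint : ∀ {g : ℝ × E → ℝ} (w : E), (∀ p ∈ forwardCone E, ContDiffAt ℝ 1 g p) →
      HasCompactSupport g → Integrable (fun x => fderiv ℝ (hyperboloidDensity ε g) x w) μ :=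
    fun w hg hgc => (((contDiff_hyperboloidDensity hε hg).continuous_fderiv one_ne_zero).clm_apply
      continuous_const).integrable_of_hasCompactSupport
      ((hasCompactSupport_hyperboloidDensity hgc ε).fderiv_apply ℝ w)
  have hpoint (x : E) := fderiv_hyperboloidDensity_sub hε
    ((hφ _ (hmem x)).differentiableAt one_ne_zero)
    ((hψ _ (hmem x)).differentiableAt one_ne_zero) (htangent _ (hmem x))
  simp only [integral_hyperboloidMeasure, ← hpoint]
  rw [integral_sub (hint _ hφ hφc) (hint _ hψ hψc),
    integral_fderiv_eq_zero μ (contDiff_hyperboloidDensity hε hφ)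
      (hasCompactSupport_hyperboloidDensity hφc ε),
    integral_fderiv_eq_zero μ (contDiff_hyperboloidDensity hε hψ)
      (hasCompactSupport_hyperboloidDensity hψc ε), sub_zero]

end Tangential

section Division

variable {E : Type*} [NormedAddCommGroup E] [InnerProductSpace ℝ E] {u : ℝ × E} {φ : ℝ × E → ℝ}

theorem isConeIntegrand_fderiv (hφ : ContDiff ℝ 1 φ) (hφc : HasCompactSupport φ) (d : ℝ × E) :
    IsConeIntegrand fun p => fderiv ℝ φ p d :=
  .of_continuous ((hφ.continuous_fderiv one_ne_zero).clm_apply continuous_const)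
    (hφc.fderiv_apply ℝ d)

theorem isConeIntegrand_division (hu : ‖u.2‖ < u.1) (hφ : ContDiff ℝ 1 φ)
    (hφc : HasCompactSupport φ) (d : ℝ × E) :
    IsConeIntegrand fun p =>
      tangencyCoeff u d p * fderiv ℝ φ p u + fderiv ℝ (tangencyCoeff u d) p u * φ p := by
  refine .add
    (.of_mul (w := fun p => (|d.1| + ‖d.2‖) / (u.1 - ‖u.2‖) * p.1) (continuousOn_tangencyCoeff hu d)
      (by fun_prop) (fun p hp => ?_)
      ((hφ.continuous_fderiv one_ne_zero).clm_apply continuous_const) (hφc.fderiv_apply ℝ u))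
    (.of_mul (continuousOn_fderiv_tangencyCoeff hu d u) continuous_const
      (fun _ hp => abs_mul_fderiv_tangencyCoeff_le hu d u hp) hφ.continuous hφc)
  rw [abs_mul, abs_of_pos hp.2, mul_comm]
  exact mul_le_mul_of_nonneg_right (abs_tangencyCoeff_le hu d hp) hp.2.le

theorem minkowskiForm_mul_eventuallyEq (d : ℝ × E) (φ : ℝ × E → ℝ) {p : ℝ × E}
    (hp : minkowskiForm u p ≠ 0) : (fun q => minkowskiForm d q * φ q) =ᶠ[𝓝 p]
      fun q => minkowskiForm u q * (tangencyCoeff u d q * φ q) := by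
  filter_upwards [(minkowskiForm u).continuous.continuousAt.eventually_ne hp] with q hq
  rw [tangencyCoeff, ← mul_assoc, mul_div_cancel₀ _ hq]

variable [FiniteDimensional ℝ E] [MeasurableSpace E] [BorelSpace E] (μ : Measure E)
  [μ.IsAddHaarMeasure]

theorem integral_hyperboloidMeasure_division {ε : ℝ} (hε : ε ≠ 0) (hu : ‖u.2‖ < u.1)
    (hφ : ContDiff ℝ 1 φ) (hφc : HasCompactSupport φ) (d : ℝ × E) :
    ∫ p, fderiv ℝ φ p d ∂hyperboloidMeasure μ ε
      = ∫ p, (tangencyCoeff u d p * fderiv ℝ φ p u + fderiv ℝ (tangencyCoeff u d) p u * φ p)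
          ∂hyperboloidMeasure μ ε := by
  have hQ : ∀ p ∈ forwardCone E, minkowskiForm u p ≠ 0 := fun _ hp =>
    (minkowskiForm_pos hu hp).ne'
  have hzero := integral_hyperboloidMeasure_fderiv_sub_eq_zero μ hε (d := d) (u := u)
    (fun p _ => hφ.contDiffAt) hφc
    (fun p hp => (contDiffAt_tangencyCoeff d (hQ p hp)).mul hφ.contDiffAt) hφc.mul_left
    (fun p hp => minkowskiForm_mul_eventuallyEq d φ (hQ p hp))
  have hleibniz : ∀ p ∈ forwardCone E, fderiv ℝ (fun q => tangencyCoeff u d q * φ q) p u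
      = tangencyCoeff u d p * fderiv ℝ φ p u + fderiv ℝ (tangencyCoeff u d) p u * φ p :=
    fun p hp => by
      rw [fderiv_fun_mul (hasFDerivAt_tangencyCoeff d (hQ p hp)).differentiableAt
        (hφ.differentiable one_ne_zero p)]
      simp [mul_comm]
  rw [← sub_eq_zero, ← integral_sub ((isConeIntegrand_fderiv hφ hφc d).integrable_of_ne_zero μ hε)
    ((isConeIntegrand_division hu hφ hφc d).integrable_of_ne_zero μ hε), ← hzero]
  simp only [integral_hyperboloidMeasure, hyperboloidDensity,
    hleibniz _ (hyperboloidChart_mem_forwardCone (.inl hε))]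

theorem division_lemma_first_order_general (hE : 2 < Module.finrank ℝ E) (hu : ‖u.2‖ < u.1)
    (d : ℝ × E) (hφ : ContDiff ℝ 1 φ) (hφc : HasCompactSupport φ) :
    Integrable (fun p => fderiv ℝ φ p d) (hyperboloidMeasure μ 0) ∧
    Integrable (fun p => tangencyCoeff u d p * fderiv ℝ φ p u +
      fderiv ℝ (tangencyCoeff u d) p u * φ p) (hyperboloidMeasure μ 0) ∧
    ∫ p, fderiv ℝ φ p d ∂hyperboloidMeasure μ 0
      = ∫ p, (tangencyCoeff u d p * fderiv ℝ φ p u + fderiv ℝ (tangencyCoeff u d) p u * φ p)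
          ∂hyperboloidMeasure μ 0 := by
  have hleft := isConeIntegrand_fderiv hφ hφc d
  have hright := isConeIntegrand_division hu hφ hφc d
  refine ⟨hleft.integrable μ hE 0, hright.integrable μ hE 0, ?_⟩
  refine tendsto_nhds_unique_of_eventuallyEq
    ((hleft.tendsto_integral μ hE).mono_left (nhdsWithin_le_nhds (s := {0}ᶜ)))
    ((hright.tendsto_integral μ hE).mono_left nhdsWithin_le_nhds) ?_
  filter_upwards [self_mem_nhdsWithin] with ε hε
  exact integral_hyperboloidMeasure_division μ hε hu hφ hφc d

end Division

section Specialization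

theorem lintegral_Ymeas {F : ℝ × E3 → ℝ≥0∞} (hF : Measurable F) :
    ∫⁻ p, F p ∂Ymeas = ∫⁻ ω, (∫⁻ t in Ioi (0 : ℝ),
      ENNReal.ofReal (t / (4 * π)) * F (t, t • (ω : E3))) ∂sphMeasure := by
  have : IsFiniteMeasure sphMeasure := inferInstanceAs (IsFiniteMeasure volume.toSphere)
  have hpolar : Measurable fun q : ℝ × sphere (0 : E3) 1 => (q.1, q.1 • (q.2 : E3)) := by fun_prop
  have hFpolar : Measurable fun q : ℝ × sphere (0 : E3) 1 => F (q.1, q.1 • (q.2 : E3)) :=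
    hF.comp hpolar
  rw [Ymeas, lintegral_map hF hpolar, lintegral_prod_symm _ hFpolar.aemeasurable]
  refine lintegral_congr fun ω => ?_
  exact lintegral_withDensity_eq_lintegral_mul _ (by fun_prop)
    (hFpolar.comp measurable_prodMk_right)

theorem Ymeas_eq_hyperboloidMeasure :
    Ymeas = hyperboloidMeasure (ENNReal.ofReal (4 * π)⁻¹ • (volume : Measure E3)) 0 := by
  refine Measure.ext_of_lintegral _ fun F hF => ?_
  have hF' : Measurable fun x : E3 =>
      ENNReal.ofReal (hyperboloidHeight 0 x)⁻¹ * F (hyperboloidChart 0 x) :=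
    (measurable_inv_hyperboloidHeight 0).mul (hF.comp (continuous_hyperboloidChart 0).measurable)
  rw [lintegral_Ymeas hF, lintegral_hyperboloidMeasure _ _ hF, lintegral_smul_measure,
    lintegral_eq_lintegral_sphere_lintegral_Ioi _ hF', smul_eq_mul,
    ← lintegral_const_mul' _ _ ENNReal.ofReal_ne_top]
  refine lintegral_congr fun ω => ?_
  rw [← lintegral_const_mul' _ _ ENNReal.ofReal_ne_top]
  refine setLIntegral_congr_fun measurableSet_Ioi fun t (ht : 0 < t) => ?_
  have hnorm : ‖t • (ω : E3)‖ = t := by simp [norm_smul, abs_of_pos ht]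
  have hdensity : t / (4 * π) = (4 * π)⁻¹ * (t ^ (Module.finrank ℝ E3 - 1) * t⁻¹) := by
    simp only [mul_inv_rev, finrank_euclideanSpace, Fintype.card_fin, Nat.add_one_sub_one]
    field_simp
  simp only [hyperboloidChart, hyperboloidHeight_zero, hnorm]
  rw [hdensity, ENNReal.ofReal_mul (by positivity), ENNReal.ofReal_mul (by positivity), mul_assoc,
    mul_assoc]

theorem alphaF_eq_tangencyCoeff (v : E3) (i : Fin 4) :
    alphaF v i = tangencyCoeff (1, v) (dir4 i) := by
  ext p
  refine Fin.cases ?_ (fun j => ?_) i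
  · simp [alphaF, dir4, tangencyCoeff, minkowskiForm_apply, real_inner_comm]
  · rw [tangencyCoeff, ← neg_div_neg_eq]
    simp [alphaF, dir4, e3, minkowskiForm_apply, real_inner_comm,
      EuclideanSpace.inner_single_left]

end Specialization

/-- **Division lemma, first order**: for `|v| < 1` and `i ∈ {0,1,2,3}`, for every
`φ ∈ C_c^∞(ℝ⁴)` one has `⟨Y, ∂_iφ⟩ = ⟨Y, α_i Tφ + (Tα_i) φ⟩`, all integrands being
integrable against the cone measure `Y`; i.e.
`∂_iY = T(α_iY) + (-Tα_i)Y = α_i T Y` in the sense of distributions on `ℝ⁴`. -/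
theorem division_lemma_first_order (v : E3) (hv : ‖v‖ < 1) (i : Fin 4) (φ : ℝ × E3 → ℝ)
    (hφ : ContDiff ℝ (⊤ : ℕ∞) φ) (hφc : HasCompactSupport φ) :
    Integrable (fun p : ℝ × E3 => fderiv ℝ φ p (dir4 i)) Ymeas ∧
    Integrable (fun p : ℝ × E3 => alphaF v i p * Tstr v φ p + TalphaF v i p * φ p) Ymeas ∧
    ∫ p : ℝ × E3, fderiv ℝ φ p (dir4 i) ∂Ymeas
      = ∫ p : ℝ × E3, (alphaF v i p * Tstr v φ p + TalphaF v i p * φ p) ∂Ymeas := by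
  have := Measure.IsAddHaarMeasure.smul (volume : Measure E3) (c := ENNReal.ofReal (4 * π)⁻¹)
    (by simp [pi_pos]) ENNReal.ofReal_ne_top
  simpa only [Ymeas_eq_hyperboloidMeasure, TalphaF, Tstr, alphaF_eq_tangencyCoeff] using
    division_lemma_first_order_general _ (by simp) (u := (1, v)) hv (dir4 i)
      (hφ.of_le (by exact_mod_cast le_top)) hφc
end
end
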